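/- arXiv:math/0303370 — 3 statements merged into one kernel-verified Lean document; each statement's English description precedes it below -/
import Mathlib

section
/- Let (A,B) be an invertible Jones pair of n×n complex matrices with A symmetric. Then for each H ∈ N_{A,B} there exists a unique n×n matrix K such that Kᵀ ∈ N_{A,Bᵀ} and Θ_{A,B}(H) = (Θ_{A,Bᵀ}(Kᵀ))ᵀ. -/
open Matrix

variable {m : Type*} [Fintype m] [DecidableEq m]

/-- The Schur (entrywise) inverse `A^(-)` of a matrix: `(A^(-))_{ij} = (A_{ij})⁻¹`. -/
noncomputable def sinv (A : Matrix m m ℂ) : Matrix m m ℂ := Matrix.of fun i j => (A i j)⁻¹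

/-- A type-II matrix: a Schur invertible matrix `W` with `W * (W^(-))ᵀ = n • I`,
where `n` is the size of the matrix. -/
def IsTypeII (A : Matrix m m ℂ) : Prop :=
  (∀ i j, A i j ≠ 0) ∧ A * (sinv A)ᵀ = (Fintype.card m : ℂ) • (1 : Matrix m m ℂ)

/-- `v_{ij} = (A e_i) ∘ (B e_j)`: the entrywise product of column `i` of `A`
with column `j` of `B`. -/
def colProd (A B : Matrix m m ℂ) (i j : m) : m → ℂ := fun k => A k i * B k j

/-- Membership in the Nomura algebra `N_{A,B}`: every `v_{ij}` is an eigenvector of `M`. -/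
def InNomura (A B M : Matrix m m ℂ) : Prop :=
  ∀ i j, ∃ c : ℂ, M.mulVec (colProd A B i j) = c • colProd A B i j

/-- `S = Θ_{A,B}(M)`: the matrix of eigenvalues, i.e. `M v_{ij} = S_{ij} v_{ij}` for all `i,j`. -/
def IsTheta (A B M S : Matrix m m ℂ) : Prop :=
  ∀ i j, M.mulVec (colProd A B i j) = S i j • colProd A B i j

/-- `(A,B)` is a Jones pair: `A` invertible, `B` Schur invertible, and
`X_A Δ_B X_A = Δ_B X_A Δ_B` and `X_A Δ_{Bᵀ} X_A = Δ_{Bᵀ} X_A Δ_{Bᵀ}`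
as operators on matrices. -/
def IsJonesPair (A B : Matrix m m ℂ) : Prop :=
  IsUnit A ∧ (∀ i j, B i j ≠ 0) ∧
  (∀ M : Matrix m m ℂ, A * (B ⊙ (A * M)) = B ⊙ (A * (B ⊙ M))) ∧
  (∀ M : Matrix m m ℂ, A * (Bᵀ ⊙ (A * M)) = Bᵀ ⊙ (A * (Bᵀ ⊙ M)))

/-- An invertible Jones pair: a Jones pair in which moreover `A` is Schur
invertible and `B` is invertible. -/
def IsInvertibleJonesPair (A B : Matrix m m ℂ) : Prop :=
  IsJonesPair A B ∧ (∀ i j, A i j ≠ 0) ∧ IsUnit B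

/-- `W` is a spin model: for some `d` with `d² = n`, `(d⁻¹ W, W^(-))` is an
invertible Jones pair. -/
def IsSpinModel (W : Matrix m m ℂ) : Prop :=
  ∃ d : ℂ, d ^ 2 = (Fintype.card m : ℂ) ∧ IsInvertibleJonesPair (d⁻¹ • W) (sinv W)

/-- Given an invertible Jones pair `(A,B)` with `A` symmetric, `K` is paired with
`H ∈ N_{A,B}` if `Kᵀ ∈ N_{A,Bᵀ}` and `Θ_{A,B}(H) = (Θ_{A,Bᵀ}(Kᵀ))ᵀ`. -/
def Paired (A B H K : Matrix m m ℂ) : Prop :=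
  ∃ S : Matrix m m ℂ, IsTheta A B H S ∧ IsTheta A Bᵀ Kᵀ Sᵀ

/-- The `4n × 4n` matrix with `4 × 4` block structure
`[[P, Q, R, R], [Q, P, R, R], [S, S, T, U], [S, S, U, T]]`. -/
def blockMat {n : ℕ} (P Q R S T U : Matrix (Fin n) (Fin n) ℂ) :
    Matrix (Fin 4 × Fin n) (Fin 4 × Fin n) ℂ :=
  Matrix.of fun x y =>
    (![![P, Q, R, R], ![Q, P, R, R], ![S, S, T, U], ![S, S, U, T]] x.1 y.1) x.2 y.2

/-- Yamada's `4n × 4n` matrix `V` built from `A`, `B` and `d` with `d² = n`. -/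
noncomputable def Vmat {n : ℕ} (A B : Matrix (Fin n) (Fin n) ℂ) (d : ℂ) :
    Matrix (Fin 4 × Fin n) (Fin 4 × Fin n) ℂ :=
  blockMat (d • A) (-(d • A)) (sinv B) (sinv B)ᵀ (d • A) (-(d • A))


/-- Summation form of `IsTheta`. -/
lemma theta_sum {n : ℕ} {A B H S : Matrix (Fin n) (Fin n) ℂ} (h : IsTheta A B H S)
    (l i j : Fin n) : ∑ k, H l k * (A k i * B k j) = S i j * (A l i * B l j) := by
  have := congrFun (h i j) l
  simpa [Matrix.mulVec, dotProduct, colProd] using this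

lemma theta_of_sum {n : ℕ} {A B H S : Matrix (Fin n) (Fin n) ℂ}
    (h : ∀ l i j, ∑ k, H l k * (A k i * B k j) = S i j * (A l i * B l j)) :
    IsTheta A B H S := by
  intro i j
  funext l
  simpa [Matrix.mulVec, dotProduct, colProd] using h l i j

/-- A Jones relation says that `Θ_{A,B}(A) = B`. -/
lemma jones_theta {n : ℕ} {A B : Matrix (Fin n) (Fin n) ℂ}
    (h : ∀ M : Matrix (Fin n) (Fin n) ℂ, A * (B ⊙ (A * M)) = B ⊙ (A * (B ⊙ M))) :
    IsTheta A B A B := by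
  apply theta_of_sum
  intro l i j
  have e := congrFun (congrFun (h (Matrix.single i j 1)) l) j
  have e1 : ∀ k, (A * Matrix.single i j (1:ℂ)) k j = A k i := by
    intro k; simp
  have e2 : B ⊙ Matrix.single i j (1:ℂ) = Matrix.single i j (B i j) := by
    ext a b
    by_cases hab : i = a ∧ j = b
    · obtain ⟨rfl, rfl⟩ := hab; simp
    · simp [Matrix.single, hab]
  rw [e2] at e
  rw [Matrix.mul_apply, Matrix.hadamard_apply] at e
  simp only [Matrix.hadamard_apply, e1] at e
  rw [Matrix.mul_single_apply_same] at e
  calc _ = ∑ k, A l k * (B k j * A k i) := Finset.sum_congr rfl fun k _ => by ring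
    _ = _ := by rw [e]; ring

/-- Left cancellation. -/
lemma inv_cancel_sum {n : ℕ} {C D : Matrix (Fin n) (Fin n) ℂ} (h : C * D = 1)
    (f : Fin n → ℂ) (i : Fin n) : ∑ p, C i p * ∑ k, D p k * f k = f i := by
  have := congrFun (congrArg (fun M => M *ᵥ f) h) i
  simp only [← Matrix.mulVec_mulVec, Matrix.one_mulVec] at this
  simpa [Matrix.mulVec, dotProduct] using this

lemma inv_cancel_sum' {n : ℕ} {C D : Matrix (Fin n) (Fin n) ℂ} (h : C * D = 1)
    (f : Fin n → ℂ) (i : Fin n) : ∑ p, (∑ k, f k * C k p) * D p i = f i := by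
  have := congrFun (congrArg (fun M => f ᵥ* M) h) i
  simp only [← Matrix.vecMul_vecMul, Matrix.vecMul_one] at this
  simpa [Matrix.vecMul, dotProduct] using this

/-- The exchanged form of `Θ_{A,B}(H) = S`. -/
lemma theta_exch {n : ℕ} {A B B' H S : Matrix (Fin n) (Fin n) ℂ} (h : IsTheta A B H S)
    (hB : B * B' = 1) (l k i : Fin n) :
    (∑ p, S i p * (B l p * B' p k)) * A l i = H l k * A k i := by
  have := inv_cancel_sum' hB (fun k => H l k * A k i) k
  rw [← this, Finset.sum_mul]
  refine Finset.sum_congr rfl fun p _ => ?_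
  have e := theta_sum h l i p
  have e2 : ∑ k, H l k * A k i * B k p = S i p * (A l i * B l p) := by
    rw [← e]; exact Finset.sum_congr rfl fun k _ => by ring
  rw [e2]; ring

/-- A rank one matrix with row and column sums one is constant. -/
lemma rank_one_const {n : ℕ} (P : Fin n → Fin n → ℂ) (a r : Fin n → ℂ)
    (h : ∀ i k, P i k = a i * r k) (h1 : ∀ i, ∑ k, P i k = 1) (h2 : ∀ k, ∑ i, P i k = 1)
    (i k : Fin n) : (n : ℂ) * P i k = 1 := by
  have g1 : ∀ i, a i * ∑ k, r k = 1 := fun i => by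
    rw [Finset.mul_sum, ← h1 i]; exact Finset.sum_congr rfl fun k _ => (h i k).symm
  have g2 : (∑ i, a i) * r k = 1 := by
    rw [Finset.sum_mul, ← h2 k]; exact Finset.sum_congr rfl fun i _ => (h i k).symm
  have hne : (∑ k, r k) ≠ 0 := fun h0 => by have := g1 i; simp [h0] at this
  have hc : ∀ j, a j = a i := fun j => mul_right_cancel₀ hne ((g1 j).trans (g1 i).symm)
  have : ∑ j, a j = n * a i := by
    rw [Finset.sum_congr rfl fun j _ => hc j]; simp
  rw [h, ← mul_assoc, ← this, g2]

lemma typeII_A {n : ℕ} {A B A' B' : Matrix (Fin n) (Fin n) ℂ} (h : IsTheta A B A B)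
    (hB0 : ∀ i j, B i j ≠ 0) (hA1 : A * A' = 1) (hA2 : A' * A = 1) (hB : B * B' = 1)
    (i k : Fin n) : (n : ℂ) * (A' i k * A k i) = 1 ∧ A i i = A k k := by
  have key : ∀ i j, ∑ l, A' i l * A l i * B l j = A i i := by
    intro i j
    have e := inv_cancel_sum hA2 (fun k => A k i * B k j) i
    simp only [theta_sum h] at e
    apply mul_right_cancel₀ (hB0 i j)
    rw [← e, Finset.sum_mul]
    exact Finset.sum_congr rfl fun k _ => by ring
  have key2 : ∀ i k, A' i k * A k i = A i i * ∑ p, B' p k := by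
    intro i k
    have e := inv_cancel_sum' hB (fun l => A' i l * A l i) k
    simp only [key] at e
    rw [← e, Finset.mul_sum]
  have s1 : ∀ i, ∑ k, A' i k * A k i = 1 := fun i => by
    rw [← Matrix.mul_apply, hA2, Matrix.one_apply_eq]
  have s2 : ∀ k, ∑ i, A' i k * A k i = 1 := fun k => by
    have : (A * A') k k = 1 := by rw [hA1, Matrix.one_apply_eq]
    rw [← this, Matrix.mul_apply]; exact Finset.sum_congr rfl fun i _ => mul_comm _ _
  refine ⟨rank_one_const (fun i k => A' i k * A k i) (fun i => A i i) _ key2 s1 s2 i k, ?_⟩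
  have g : ∀ i, A i i * ∑ k, ∑ p, B' p k = 1 := fun i => by
    rw [Finset.mul_sum, ← s1 i]; exact Finset.sum_congr rfl fun k _ => (key2 i k).symm
  have hne : (∑ k, ∑ p, B' p k) ≠ 0 := fun h0 => by have := g i; simp [h0] at this
  exact mul_right_cancel₀ hne ((g i).trans (g k).symm)

lemma typeII_B {n : ℕ} {A B B' : Matrix (Fin n) (Fin n) ℂ} (h : IsTheta A B A B)
    (hA0 : ∀ i j, A i j ≠ 0) (hd : ∀ i k, A i i = A k k)
    (hB1 : B * B' = 1) (hB2 : B' * B = 1)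
    (l j : Fin n) : (n : ℂ) * (B l j * B' j l) = 1 := by
  have key : ∀ l i, ∑ p, B i p * (B l p * B' p l) = A l l := by
    intro l i
    exact mul_right_cancel₀ (hA0 l i) (theta_exch h hB1 l l i)
  have key2 : ∀ l j, B l j * B' j l = A l l * ∑ p, B' j p := by
    intro l j
    have e := inv_cancel_sum hB2 (fun p => B l p * B' p l) j
    simp only [key] at e
    rw [← e, Finset.mul_sum]
    exact Finset.sum_congr rfl fun k _ => mul_comm _ _
  refine rank_one_const (fun l j => B l j * B' j l) (fun l => A l l) _ key2 ?_ ?_ l j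
  · intro i
    rw [← Matrix.mul_apply, hB1, Matrix.one_apply_eq]
  · intro k
    have : (B' * B) k k = 1 := by rw [hB2, Matrix.one_apply_eq]
    rw [← this, Matrix.mul_apply]; exact Finset.sum_congr rfl fun i _ => mul_comm _ _

lemma exists_paired_aux {n : ℕ} (hn : 0 < n)
    {A B H S A' B' : Matrix (Fin n) (Fin n) ℂ}
    (hA0 : ∀ i j, A i j ≠ 0) (hB0 : ∀ i j, B i j ≠ 0)
    (hA1 : A * A' = 1) (hA2 : A' * A = 1) (hB1 : B * B' = 1) (hB2 : B' * B = 1)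
    (hs : ∀ i j, A i j = A j i)
    (J1 : IsTheta A B A B) (J2 : IsTheta A Bᵀ A Bᵀ) (hH : IsTheta A B H S) :
    ∃ M, IsTheta A Bᵀ M Sᵀ := by
  have hn0 : (n : ℂ) ≠ 0 := by exact_mod_cast hn.ne'
  have tA := fun i k => (typeII_A J1 hB0 hA1 hA2 hB1 i k).1
  have tB := typeII_B J1 hA0 (fun i k => (typeII_A J1 hB0 hA1 hA2 hB1 i k).2) hB1 hB2
  -- step 0: general exchange
  have ex : ∀ {H S : Matrix (Fin n) (Fin n) ℂ}, IsTheta A B H S → ∀ l k,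
      S *ᵥ (fun p => B l p * B' p k) = fun i => H l k * (A k i / A l i) := by
    intro H S hH l k
    funext i
    have e := theta_exch hH hB1 l k i
    have h0 := hA0 l i
    simp only [Matrix.mulVec, dotProduct]
    rw [hs k i, hs l i] at *
    rw [← mul_div_assoc, eq_div_iff h0]
    rw [← e]
  -- step 1
  obtain ⟨L, hL⟩ : ∃ L, L = S * B' := ⟨_, rfl⟩
  have hLB : L * B = S := by rw [hL, Matrix.mul_assoc, hB2, Matrix.mul_one]
  have st1 : ∀ l k i, ∑ q, L i q * (A k q / A l q) = H l k / A l k * (A k i / A l i) := by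
    intro l k i
    have e := congrFun (ex hH l k) i
    rw [← hLB, ← Matrix.mulVec_mulVec, ex J1] at e
    simp only [Matrix.mulVec, dotProduct] at e
    have h0 := hA0 l k
    rw [div_mul_eq_mul_div, eq_div_iff h0, ← e, Finset.sum_mul]
    exact Finset.sum_congr rfl fun q _ => by ring
  -- step 2
  obtain ⟨S1, hS1⟩ : ∃ S1 : Matrix (Fin n) (Fin n) ℂ,
      S1 = Matrix.of fun i j => (n : ℂ)⁻¹ * ∑ p, H p i / A p i * B p j := ⟨_, rfl⟩
  have st2 : IsTheta A B (Matrix.of fun l k => L l k * A l k) S1 := by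
    apply theta_of_sum
    intro l i j
    have e : ∀ k, A k l * B k j = ∑ p, A' k p * (B l j * (A p l * B p j)) := by
      intro k
      have e := inv_cancel_sum hA2 (fun k => A k l * B k j) k
      simp only [theta_sum J1] at e
      exact e.symm
    have e3 : ∀ k p, A' k p = (n : ℂ)⁻¹ * (A p k)⁻¹ := by
      intro k p
      have h0 := hA0 p k
      have := tA k p
      field_simp
      linear_combination this
    calc _ = ∑ k, L l k * A k i * (A k l * B k j) := by
            refine Finset.sum_congr rfl fun k _ => ?_
            simp only [Matrix.of_apply]; rw [hs l k]; ring
      _ = ∑ k, ∑ p, L l k * A k i * (A' k p * (B l j * (A p l * B p j))) := by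
            exact Finset.sum_congr rfl fun k _ => by rw [e k, Finset.mul_sum]
      _ = ∑ p, (n : ℂ)⁻¹ * (B l j * (A p l * B p j)) * ∑ k, L l k * (A i k / A p k) := by
            rw [Finset.sum_comm]
            refine Finset.sum_congr rfl fun p _ => ?_
            rw [Finset.mul_sum]
            refine Finset.sum_congr rfl fun k _ => ?_
            rw [e3, hs k i]; ring
      _ = _ := by
            simp only [st1, hS1, Matrix.of_apply]
            rw [Finset.mul_sum, Finset.sum_mul]
            refine Finset.sum_congr rfl fun p _ => ?_
            have h0 := hA0 p l
            rw [hs i l]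
            field_simp
  -- step 3
  obtain ⟨R, hR⟩ : ∃ R, R = B' * S1 := ⟨_, rfl⟩
  have st3 : ∀ l k i, ∑ p, R i p * (B l p * B' p k) = L l k * (B l i * B' i k) := by
    intro l k i
    have e : S1 *ᵥ (fun p => B l p * B' p k) = L l k • (B *ᵥ (fun p => B l p * B' p k)) := by
      rw [ex st2, ex J1]
      funext i
      simp [mul_assoc]
    have e2 : R *ᵥ (fun p => B l p * B' p k) = L l k • (fun p => B l p * B' p k) := by
      rw [hR, ← Matrix.mulVec_mulVec, e, Matrix.mulVec_smul, Matrix.mulVec_mulVec, hB2,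
        Matrix.one_mulVec]
    simpa [Matrix.mulVec, dotProduct] using congrFun e2 i
  -- step 4
  refine ⟨Matrix.of fun l k => n * (R l k * A l k), ?_⟩
  apply theta_of_sum
  intro l i j
  have e : ∀ k, A l k * A k i = ∑ q, B' k q * (B q i * (A l i * B q l)) := by
    intro k
    have e := inv_cancel_sum hB2 (fun k => A l k * A k i) k
    rw [← e]
    refine Finset.sum_congr rfl fun q _ => ?_
    have := theta_sum J2 l i q
    simp only [Matrix.transpose_apply] at this
    rw [← this]
    congr 1
    exact Finset.sum_congr rfl fun q _ => by ring
  calc _ = ∑ k, n * (R l k * B j k) * (A l k * A k i) := by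
          refine Finset.sum_congr rfl fun k _ => ?_
          simp only [Matrix.of_apply, Matrix.transpose_apply]; ring
    _ = ∑ k, ∑ q, n * (R l k * B j k) * (B' k q * (B q i * (A l i * B q l))) := by
          exact Finset.sum_congr rfl fun k _ => by rw [e k, Finset.mul_sum]
    _ = ∑ q, n * (B q i * (A l i * B q l)) * ∑ k, R l k * (B j k * B' k q) := by
          rw [Finset.sum_comm]
          refine Finset.sum_congr rfl fun p _ => ?_
          rw [Finset.mul_sum]
          exact Finset.sum_congr rfl fun k _ => by ring
    _ = _ := by
          simp only [st3, Matrix.transpose_apply]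
          rw [← hLB, Matrix.mul_apply, Finset.sum_mul]
          refine Finset.sum_congr rfl fun q _ => ?_
          linear_combination (B q i * A l i * L j q * B j l) * tB q l

theorem exists_unique_paired {n : ℕ} (hn : 0 < n)
    (A B H : Matrix (Fin n) (Fin n) ℂ)
    (h : IsInvertibleJonesPair A B) (hAs : Aᵀ = A) (hH : InNomura A B H) :
    ∃! K : Matrix (Fin n) (Fin n) ℂ, Paired A B H K := by
  obtain ⟨⟨hA, hB0, j1, j2⟩, hA0, hB⟩ := h
  have J1 := jones_theta j1
  have J2 := jones_theta j2
  have hAd := (Matrix.isUnit_iff_isUnit_det A).1 hA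
  have hBd := (Matrix.isUnit_iff_isUnit_det B).1 hB
  choose S hS using hH
  have hS' : IsTheta A B H (Matrix.of S) := hS
  obtain ⟨M, hM⟩ := exists_paired_aux hn hA0 hB0 (Matrix.mul_nonsing_inv A hAd)
    (Matrix.nonsing_inv_mul A hAd) (Matrix.mul_nonsing_inv B hBd) (Matrix.nonsing_inv_mul B hBd)
    (fun i j => by conv_lhs => rw [← hAs, Matrix.transpose_apply]) J1 J2 hS'
  refine ⟨Mᵀ, ⟨Matrix.of S, hS', by simpa using hM⟩, ?_⟩
  rintro K ⟨S2, h2, h3⟩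
  have hSS : S2 = Matrix.of S := by
    ext i j
    have e1 := theta_sum h2 i i j
    rw [theta_sum hS' i i j] at e1
    exact (mul_right_cancel₀ (mul_ne_zero (hA0 i i) (hB0 i j)) e1).symm
  rw [hSS] at h3
  have hBT : Bᵀ * B⁻¹ᵀ = 1 := by
    rw [← Matrix.transpose_mul, Matrix.nonsing_inv_mul B hBd, Matrix.transpose_one]
  ext l k
  have e1 := theta_exch h3 hBT k l l
  rw [theta_exch hM hBT k l l] at e1
  exact (mul_right_cancel₀ (hA0 l l) e1).symm
end

section
/- Let (A,B) be an invertible Jones pair of n×n complex matrices with A symmetric. Let F, F₁ ∈ N_A, let G, G₁, H, H₁ ∈ N_{A,B}, and let K, K₁ be paired with H, H₁ respectively. Then the matrix product M(F,G,H)·M(F₁,G₁,H₁) equals M(2n·F∘F₁ + 2n·G∘G₁, 2n·F∘G₁ + 2n·G∘F₁, 2HH₁), where 2n·F∘F₁ + 2n·G∘G₁ ∈ N_A, 2n·F∘G₁ + 2n·G∘F₁ ∈ N_{A,B}, 2HH₁ ∈ N_{A,B}, and the matrix 2KK₁ is paired with 2HH₁ (and is the K-block of the product). Moreover M(F,G,H)·M(F₁,G₁,H₁)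 = M(F₁,G₁,H₁)·M(F,G,H). -/
open Matrix

variable {m : Type*} [Fintype m] [DecidableEq m]

theorem aux_sinv_sinv (A : Matrix m m ℂ) : sinv (sinv A) = A := by
  ext i j; simp [sinv]

/-- Row quotient vector `y_{kl}(i) = P_{ki} / P_{li}`. -/
noncomputable def rowQ (P : Matrix m m ℂ) (k l : m) : m → ℂ := fun i => P k i * (P l i)⁻¹

theorem rowQ_sinv (P : Matrix m m ℂ) (k l : m) : rowQ (sinv P) k l = rowQ P l k := by
  ext i; simp [rowQ, sinv, mul_comm]

theorem isTheta_iff (A B M S : Matrix m m ℂ) : IsTheta A B M S ↔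
    ∀ i j k, ∑ l, M k l * (A l i * B l j) = S i j * (A k i * B k j) := by
  constructor
  · intro h i j k
    have := congrFun (h i j) k
    simpa [Matrix.mulVec, dotProduct, colProd] using this
  · intro h i j
    ext k
    simpa [Matrix.mulVec, dotProduct, colProd] using h i j k

theorem isTheta_swap {A B M S : Matrix m m ℂ} (h : IsTheta A B M S) : IsTheta B A M Sᵀ := by
  rw [isTheta_iff] at *
  intro i j k
  simpa [mul_comm, mul_left_comm] using h j i k

theorem typeII_row {P : Matrix m m ℂ} (hP : IsTypeII P) (k l : m) :
    ∑ i, P k i * (P l i)⁻¹ = if k = l then (Fintype.card m : ℂ) else 0 := by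
  have := congrFun (congrFun hP.2 k) l
  simpa [Matrix.mul_apply, sinv, Matrix.one_apply] using this

theorem typeII_col {P : Matrix m m ℂ} (hP : IsTypeII P) (hc : (Fintype.card m : ℂ) ≠ 0) (i j : m) :
    ∑ k, P k i * (P k j)⁻¹ = if i = j then (Fintype.card m : ℂ) else 0 := by
  have h1 : P * ((Fintype.card m : ℂ)⁻¹ • (sinv P)ᵀ) = 1 := by
    rw [Matrix.mul_smul, hP.2, smul_smul, inv_mul_cancel₀ hc, one_smul]
  have h2 := mul_eq_one_comm.mp h1
  rw [Matrix.smul_mul] at h2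
  have h3 : (sinv P)ᵀ * P = (Fintype.card m : ℂ) • (1 : Matrix m m ℂ) := by
    rw [← h2, smul_smul, mul_inv_cancel₀ hc, one_smul]
  have := congrFun (congrFun h3 j) i
  simpa [Matrix.mul_apply, sinv, Matrix.one_apply, mul_comm, eq_comm] using this

theorem typeII_sinv {P : Matrix m m ℂ} (hP : IsTypeII P) : IsTypeII (sinv P) := by
  refine ⟨fun i j => by simpa [sinv] using hP.1 i j, ?_⟩
  rw [aux_sinv_sinv]
  have := congrArg Matrix.transpose hP.2
  simpa [Matrix.transpose_mul] using this

theorem exch_of {P Q M S : Matrix m m ℂ} (hP : IsTypeII P) (hQ : ∀ i j, Q i j ≠ 0)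
    (h : IsTheta P Q M S) (k l : m) :
    rowQ P k l ᵥ* S = ((Fintype.card m : ℂ) * M k l) • rowQ Q l k := by
  rw [isTheta_iff] at h
  ext j
  have hq := hQ k j
  simp only [Matrix.vecMul, dotProduct, rowQ, Pi.smul_apply, smul_eq_mul]
  have : (∑ i, P k i * (P l i)⁻¹ * S i j) * Q k j = (Fintype.card m : ℂ) * M k l * Q l j := by
    calc (∑ i, P k i * (P l i)⁻¹ * S i j) * Q k j
        = ∑ i, (S i j * (P k i * Q k j)) * (P l i)⁻¹ := by
          rw [Finset.sum_mul]; exact Finset.sum_congr rfl fun i _ => by ring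
      _ = ∑ i, ∑ p, (M k p * (P p i * Q p j)) * (P l i)⁻¹ := by
          refine Finset.sum_congr rfl fun i _ => ?_
          rw [← h i j k, Finset.sum_mul]
      _ = ∑ p, M k p * Q p j * ∑ i, P p i * (P l i)⁻¹ := by
          rw [Finset.sum_comm]
          refine Finset.sum_congr rfl fun p _ => ?_
          rw [Finset.mul_sum]; exact Finset.sum_congr rfl fun i _ => by ring
      _ = _ := by
          simp only [typeII_row hP]
          simp; ring
  apply mul_right_cancel₀ hq
  rw [this]
  field_simp

theorem theta_of {P Q M S : Matrix m m ℂ} (hP : IsTypeII P) (hQ : ∀ i j, Q i j ≠ 0)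
    (hc : (Fintype.card m : ℂ) ≠ 0)
    (h : ∀ k l, rowQ P k l ᵥ* S = ((Fintype.card m : ℂ) * M k l) • rowQ Q l k) :
    IsTheta P Q M S := by
  rw [isTheta_iff]
  intro i j k
  apply mul_left_cancel₀ hc
  have h' : ∀ l, (Fintype.card m : ℂ) * M k l * Q l j = (∑ p, P k p * (P l p)⁻¹ * S p j) * Q k j := by
    intro l
    have := congrFun (h k l) j
    simp only [Matrix.vecMul, dotProduct, rowQ, Pi.smul_apply, smul_eq_mul] at this
    rw [this]
    have := hQ k j
    field_simp
  calc (Fintype.card m : ℂ) * ∑ l, M k l * (P l i * Q l j)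
      = ∑ l, ((Fintype.card m : ℂ) * M k l * Q l j) * P l i := by
        rw [Finset.mul_sum]; exact Finset.sum_congr rfl fun i _ => by ring
    _ = ∑ l, ∑ p, (P k p * (P l p)⁻¹ * S p j) * Q k j * P l i := by
        refine Finset.sum_congr rfl fun l _ => ?_
        rw [h' l, Finset.sum_mul, Finset.sum_mul]
    _ = ∑ p, P k p * S p j * Q k j * ∑ l, P l i * (P l p)⁻¹ := by
        rw [Finset.sum_comm]
        refine Finset.sum_congr rfl fun p _ => ?_
        rw [Finset.mul_sum]; exact Finset.sum_congr rfl fun i _ => by ring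
    _ = _ := by
        simp only [typeII_col hP hc]
        simp; ring

theorem theta_unique {P Q M S S' : Matrix m m ℂ} (hP : ∀ i j, P i j ≠ 0) (hQ : ∀ i j, Q i j ≠ 0)
    (h : IsTheta P Q M S) (h' : IsTheta P Q M S') : S = S' := by
  rw [isTheta_iff] at h h'
  ext i j
  have := (h i j i).symm.trans (h' i j i)
  exact mul_right_cancel₀ (mul_ne_zero (hP _ _) (hQ _ _)) this

theorem theta_inj {P Q M M' S : Matrix m m ℂ} (hP : IsTypeII P) (hQ : ∀ i j, Q i j ≠ 0)
    (hc : (Fintype.card m : ℂ) ≠ 0)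
    (h : IsTheta P Q M S) (h' : IsTheta P Q M' S) : M = M' := by
  ext k l
  have := congrFun ((exch_of hP hQ h k l).symm.trans (exch_of hP hQ h' k l)) k
  simp only [rowQ, Pi.smul_apply, smul_eq_mul] at this
  have h2 := mul_right_cancel₀ (mul_ne_zero (hQ _ _) (inv_ne_zero (hQ _ _))) this
  exact mul_left_cancel₀ hc h2

theorem theta_mul {P Q M M' S S' : Matrix m m ℂ} (h : IsTheta P Q M S) (h' : IsTheta P Q M' S') :
    IsTheta P Q (M * M') (S ⊙ S') := by
  intro i j
  rw [← Matrix.mulVec_mulVec, h' i j, Matrix.mulVec_smul, h i j, smul_smul]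
  simp [mul_comm]

theorem theta_smul {P Q M S : Matrix m m ℂ} (c : ℂ) (h : IsTheta P Q M S) :
    IsTheta P Q (c • M) (c • S) := by
  intro i j
  rw [Matrix.smul_mulVec, h i j, smul_smul]
  simp

theorem jones_typeII_A {A B : Matrix m m ℂ} (hc : (Fintype.card m : ℂ) ≠ 0)
    (h : IsInvertibleJonesPair A B) : IsTypeII A := by
  obtain ⟨⟨hA, hB, hJ, -⟩, hA0, hBu⟩ := h
  refine ⟨hA0, ?_⟩
  obtain ⟨C, hAC, hCA⟩ := isUnit_iff_exists.mp hA
  obtain ⟨E, hBE, hEB⟩ := isUnit_iff_exists.mp hBu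
  have hw : ∀ k j, ∑ l, A k l * C l k * B l j = A k k := by
    intro k j
    have h1 := hJ (Matrix.of fun l _ => C l k)
    have h2 := congrFun (congrFun h1 k) j
    have h3 : A * (Matrix.of fun l (_ : m) => C l k) = Matrix.of fun l (_ : m) => if l = k then 1 else 0 := by
      ext l q
      have := congrFun (congrFun hAC l) k
      simpa [Matrix.mul_apply, Matrix.one_apply] using this
    rw [h3] at h2
    simp [Matrix.mul_apply] at h2
    have h4 := mul_left_cancel₀ (hB k j) ((mul_comm _ _).trans h2)
    rw [h4]
    exact Finset.sum_congr rfl fun i _ => by ring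
  set u : m → ℂ := fun l => ∑ j, E j l with hu
  have hwu : ∀ k l, A k l * C l k = A k k * u l := by
    intro k l
    have hBE' : ∀ p, ∑ j, B p j * E j l = if p = l then 1 else 0 := by
      intro p
      have := congrFun (congrFun hBE p) l
      simpa [Matrix.mul_apply, Matrix.one_apply] using this
    calc A k l * C l k = ∑ p, A k p * C p k * ∑ j, B p j * E j l := by simp [hBE']
      _ = ∑ j, (∑ p, A k p * C p k * B p j) * E j l := by
        simp only [Finset.mul_sum, Finset.sum_mul]
        rw [Finset.sum_comm]
        exact Finset.sum_congr rfl fun i _ => Finset.sum_congr rfl fun i _ => by ring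
      _ = _ := by simp only [hw, hu, Finset.mul_sum]
  have hr : ∀ k, A k k * ∑ l, u l = 1 := by
    intro k
    have := congrFun (congrFun hAC k) k
    simp only [Matrix.mul_apply, hwu, Matrix.one_apply_eq, ← Finset.mul_sum] at this
    exact this
  have hcol : ∀ l, (∑ k, A k k) * u l = 1 := by
    intro l
    have := congrFun (congrFun hCA l) l
    simp only [Matrix.mul_apply, mul_comm (C _ _), hwu, Matrix.one_apply_eq, ← Finset.sum_mul] at this
    exact this
  have hk : ∀ k l, A k l * C l k = (Fintype.card m : ℂ)⁻¹ := by
    intro k l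
    have hU : (∑ l, u l) ≠ 0 := right_ne_zero_of_mul_eq_one (hr k)
    have hak : ∀ p, A p p = A k k := fun p => mul_right_cancel₀ hU ((hr p).trans (hr k).symm)
    have := hcol l
    simp only [hak, Finset.sum_const, Finset.card_univ, nsmul_eq_mul] at this
    rw [hwu]
    exact eq_inv_of_mul_eq_one_right (by rw [← this]; ring)
  have : (sinv A)ᵀ = (Fintype.card m : ℂ) • C := by
    ext l k
    have h1 := hk k l
    have h2 := hA0 k l
    simp only [sinv, Matrix.transpose_apply, Matrix.of_apply, Matrix.smul_apply, smul_eq_mul]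
    field_simp at h1 ⊢
    linear_combination -h1
  rw [this, Matrix.mul_smul, hAC]

theorem jones_diag {A B : Matrix m m ℂ} (h : IsJonesPair A B) (j : m) :
    A * diagonal (fun k => B k j) * A =
      diagonal (fun k => B k j) * A * diagonal (fun k => B k j) := by
  ext k i
  have := congrFun (congrFun (h.2.2.1 (Matrix.of fun p _ => if p = i then 1 else 0)) k) j
  simpa [Matrix.mul_apply, Matrix.diagonal_apply, Finset.sum_mul, Finset.mul_sum, mul_assoc] using this

theorem jones_typeII_B {A B : Matrix m m ℂ} (hc : (Fintype.card m : ℂ) ≠ 0)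
    (h : IsInvertibleJonesPair A B) : IsTypeII B := by
  have hA2 := jones_typeII_A hc h
  have hd := jones_diag h.1
  obtain ⟨⟨hA, hB, hJ, -⟩, hA0, hBu⟩ := h
  refine ⟨hB, ?_⟩
  set c := (Fintype.card m : ℂ) with hcdef
  set C := c⁻¹ • (sinv A)ᵀ with hC
  have hAC : A * C = 1 := by
    rw [hC, Matrix.mul_smul, hA2.2, smul_smul, inv_mul_cancel₀ hc, one_smul]
  have hCA := mul_eq_one_comm.mp hAC
  have key : ∀ i j k, (B k i - B k j) * ∑ l, B l i * (B l j)⁻¹ = 0 := by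
    intro i j k
    set D := diagonal (fun k => B k i) with hD
    set D' := diagonal (fun k => B k j) with hD'
    set I' := diagonal (fun k => (B k j)⁻¹) with hI'
    have e1 : A * D * A = D * A * D := hd i
    have e2 : A * D' * A = D' * A * D' := hd j
    have e3 : D' * I' = 1 := by
      rw [hD', hI', diagonal_mul_diagonal]
      simp [hB]
    have e4 : I' * D' = 1 := mul_eq_one_comm.mp e3
    have e5 : A * I' * C = I' * C * D' := by
      have : A * D' * A * I' * C = D' := by
        rw [e2, Matrix.mul_assoc (D' * A), e3, Matrix.mul_one, Matrix.mul_assoc, hAC, Matrix.mul_one]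
      calc A * I' * C = (I' * D') * A * I' * C := by rw [e4, Matrix.one_mul]
        _ = I' * (C * A) * D' * A * I' * C := by rw [hCA, Matrix.mul_one]
        _ = I' * C * (A * D' * A * I' * C) := by simp only [Matrix.mul_assoc]
        _ = _ := by rw [this]
    have e6 : D * (A * (D * I') * C) = (A * (D * I') * C) * D' := by
      calc D * (A * (D * I') * C) = (D * A * D) * I' * C := by simp only [Matrix.mul_assoc]
        _ = A * D * (A * I' * C) := by rw [← e1]; simp only [Matrix.mul_assoc]
        _ = _ := by rw [e5]; simp only [Matrix.mul_assoc]
    have e7 : (A * (D * I') * C) k k = c⁻¹ * ∑ l, B l i * (B l j)⁻¹ := by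
      rw [hD, hI', diagonal_mul_diagonal, Matrix.mul_apply, Finset.mul_sum]
      refine Finset.sum_congr rfl fun l _ => ?_
      have := hA0 k l
      simp only [Matrix.mul_diagonal, hC, sinv, Matrix.smul_apply, Matrix.transpose_apply,
        Matrix.of_apply, smul_eq_mul]
      field_simp
    have e8 := congrFun (congrFun e6 k) k
    rw [hD, hD', Matrix.diagonal_mul, Matrix.mul_diagonal, ← hD, e7] at e8
    apply mul_left_cancel₀ (inv_ne_zero hc)
    linear_combination e8
  have hT : (sinv B)ᵀ * B = c • (1 : Matrix m m ℂ) := by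
    ext j i
    have e : ((sinv B)ᵀ * B) j i = ∑ l, B l i * (B l j)⁻¹ := by
      simp [Matrix.mul_apply, sinv, mul_comm]
    rw [e]
    by_cases hij : j = i
    · subst hij
      simp [hB, hcdef]
    · simp only [Matrix.smul_apply, Matrix.one_apply_ne hij, smul_zero]
      by_contra hne
      obtain ⟨E, hBE, hEB⟩ := isUnit_iff_exists.mp hBu
      have hcols : ∀ k, B k i = B k j := fun k =>
        sub_eq_zero.mp ((mul_eq_zero.mp (key i j k)).resolve_right hne)
      have h1 := congrFun (congrFun hEB j) j
      have h2 := congrFun (congrFun hEB j) i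
      simp only [Matrix.mul_apply, hcols, Matrix.one_apply_eq, Matrix.one_apply_ne hij] at h1 h2
      rw [h1] at h2
      exact one_ne_zero h2
  have h1 : (c⁻¹ • (sinv B)ᵀ) * B = 1 := by
    rw [Matrix.smul_mul, hT, smul_smul, inv_mul_cancel₀ hc, one_smul]
  have h2 := mul_eq_one_comm.mp h1
  rw [Matrix.mul_smul] at h2
  rw [← h2, smul_smul, mul_inv_cancel₀ hc, one_smul]

theorem blockMat_prod {n : ℕ} (a h r s t k a' h' r' s' t' k' : Matrix (Fin n) (Fin n) ℂ) :
    blockMat (a + h) (a - h) r s (t + k) (t - k) *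
      blockMat (a' + h') (a' - h') r' s' (t' + k') (t' - k') =
    blockMat (((2 : ℂ) • (a * a') + (2 : ℂ) • (r * s')) + (2 : ℂ) • (h * h'))
      (((2 : ℂ) • (a * a') + (2 : ℂ) • (r * s')) - (2 : ℂ) • (h * h'))
      ((2 : ℂ) • (a * r') + (2 : ℂ) • (r * t'))
      ((2 : ℂ) • (s * a') + (2 : ℂ) • (t * s'))
      (((2 : ℂ) • (t * t') + (2 : ℂ) • (s * r')) + (2 : ℂ) • (k * k'))
      (((2 : ℂ) • (t * t') + (2 : ℂ) • (s * r')) - (2 : ℂ) • (k * k')) := by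
  have gen : ∀ (X Y Z : Fin 4 → Fin 4 → Matrix (Fin n) (Fin n) ℂ),
      (∀ x y, X x 0 * Y 0 y + X x 1 * Y 1 y + X x 2 * Y 2 y + X x 3 * Y 3 y = Z x y) →
      (Matrix.of fun p q : Fin 4 × Fin n => X p.1 q.1 p.2 q.2) *
        (Matrix.of fun p q : Fin 4 × Fin n => Y p.1 q.1 p.2 q.2) =
        Matrix.of fun p q : Fin 4 × Fin n => Z p.1 q.1 p.2 q.2 := by
    intro X Y Z hXYZ
    ext ⟨x, i⟩ ⟨y, j⟩
    rw [Matrix.mul_apply, Fintype.sum_prod_type, Fin.sum_univ_four]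
    simp only [Matrix.of_apply, ← hXYZ, Matrix.add_apply, Matrix.mul_apply]
  apply gen
  simp only [two_smul]
  intro x y
  have e0 : (a + h) * (a' + h') + (a - h) * (a' - h') + r * s' + r * s' = (((a * a' + a * a') + (r * s' + r * s')) + (h * h' + h * h')) := by
    simp only [mul_add, add_mul, sub_mul, mul_sub]; abel
  have e1 : (a + h) * (a' - h') + (a - h) * (a' + h') + r * s' + r * s' = (((a * a' + a * a') + (r * s' + r * s')) - (h * h' + h * h')) := by
    simp only [mul_add, add_mul, sub_mul, mul_sub]; abel
  have e2 : (a + h) * r' + (a - h) * r' + r * (t' + k') + r * (t' - k') = ((a * r' + a * r') + (r * t' + r * t')) := by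
    simp only [mul_add, add_mul, sub_mul, mul_sub]; abel
  have e3 : (a + h) * r' + (a - h) * r' + r * (t' - k') + r * (t' + k') = ((a * r' + a * r') + (r * t' + r * t')) := by
    simp only [mul_add, add_mul, sub_mul, mul_sub]; abel
  have e4 : (a - h) * (a' + h') + (a + h) * (a' - h') + r * s' + r * s' = (((a * a' + a * a') + (r * s' + r * s')) - (h * h' + h * h')) := by
    simp only [mul_add, add_mul, sub_mul, mul_sub]; abel
  have e5 : (a - h) * (a' - h') + (a + h) * (a' + h') + r * s' + r * s' = (((a * a' + a * a') + (r * s' + r * s')) + (h * h' + h * h')) := by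
    simp only [mul_add, add_mul, sub_mul, mul_sub]; abel
  have e6 : (a - h) * r' + (a + h) * r' + r * (t' + k') + r * (t' - k') = ((a * r' + a * r') + (r * t' + r * t')) := by
    simp only [mul_add, add_mul, sub_mul, mul_sub]; abel
  have e7 : (a - h) * r' + (a + h) * r' + r * (t' - k') + r * (t' + k') = ((a * r' + a * r') + (r * t' + r * t')) := by
    simp only [mul_add, add_mul, sub_mul, mul_sub]; abel
  have e8 : s * (a' + h') + s * (a' - h') + (t + k) * s' + (t - k) * s' = ((s * a' + s * a') + (t * s' + t * s')) := by
    simp only [mul_add, add_mul, sub_mul, mul_sub]; abel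
  have e9 : s * (a' - h') + s * (a' + h') + (t + k) * s' + (t - k) * s' = ((s * a' + s * a') + (t * s' + t * s')) := by
    simp only [mul_add, add_mul, sub_mul, mul_sub]; abel
  have e10 : s * r' + s * r' + (t + k) * (t' + k') + (t - k) * (t' - k') = (((t * t' + t * t') + (s * r' + s * r')) + (k * k' + k * k')) := by
    simp only [mul_add, add_mul, sub_mul, mul_sub]; abel
  have e11 : s * r' + s * r' + (t + k) * (t' - k') + (t - k) * (t' + k') = (((t * t' + t * t') + (s * r' + s * r')) - (k * k' + k * k')) := by
    simp only [mul_add, add_mul, sub_mul, mul_sub]; abel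
  have e12 : s * (a' + h') + s * (a' - h') + (t - k) * s' + (t + k) * s' = ((s * a' + s * a') + (t * s' + t * s')) := by
    simp only [mul_add, add_mul, sub_mul, mul_sub]; abel
  have e13 : s * (a' - h') + s * (a' + h') + (t - k) * s' + (t + k) * s' = ((s * a' + s * a') + (t * s' + t * s')) := by
    simp only [mul_add, add_mul, sub_mul, mul_sub]; abel
  have e14 : s * r' + s * r' + (t - k) * (t' + k') + (t + k) * (t' - k') = (((t * t' + t * t') + (s * r' + s * r')) - (k * k' + k * k')) := by
    simp only [mul_add, add_mul, sub_mul, mul_sub]; abel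
  have e15 : s * r' + s * r' + (t - k) * (t' - k') + (t + k) * (t' + k') = (((t * t' + t * t') + (s * r' + s * r')) + (k * k' + k * k')) := by
    simp only [mul_add, add_mul, sub_mul, mul_sub]; abel
  match x, y with
  | 0, 0 => exact e0
  | 0, 1 => exact e1
  | 0, 2 => exact e2
  | 0, 3 => exact e3
  | 1, 0 => exact e4
  | 1, 1 => exact e5
  | 1, 2 => exact e6
  | 1, 3 => exact e7
  | 2, 0 => exact e8
  | 2, 1 => exact e9
  | 2, 2 => exact e10
  | 2, 3 => exact e11
  | 3, 0 => exact e12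
  | 3, 1 => exact e13
  | 3, 2 => exact e14
  | 3, 3 => exact e15

theorem core {n : ℕ} (A B : Matrix (Fin n) (Fin n) ℂ) (hc : ((Fintype.card (Fin n) : ℕ) : ℂ) ≠ 0)
    (hA : IsTypeII A) (hB : IsTypeII B)
    (F F₁ G G₁ SF SF₁ TF TF₁ SG SG₁ SGt SG₁t : Matrix (Fin n) (Fin n) ℂ)
    (hSF : IsTheta A (sinv A) F SF) (hSF₁ : IsTheta A (sinv A) F₁ SF₁)
    (hTF : IsTheta (sinv B) (sinv (sinv B)) F TF)
    (hTF₁ : IsTheta (sinv B) (sinv (sinv B)) F₁ TF₁)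
    (hSG : IsTheta A B G SG) (hSG₁ : IsTheta A B G₁ SG₁)
    (hSGt : IsTheta A B Gᵀ SGt) (hSG₁t : IsTheta A B G₁ᵀ SG₁t) :
    IsTheta A (sinv A) ((2 * (n : ℂ)) • (F ⊙ F₁) + (2 * (n : ℂ)) • (G ⊙ G₁))
      ((2 : ℂ) • (SF * SF₁) + (2 : ℂ) • (SG * SG₁tᵀ)) ∧
    IsTheta (sinv B) (sinv (sinv B)) ((2 * (n : ℂ)) • (F ⊙ F₁) + (2 * (n : ℂ)) • (G ⊙ G₁))
      ((2 : ℂ) • (TF * TF₁) + (2 : ℂ) • (SGtᵀ * SG₁)) ∧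
    IsTheta A B ((2 * (n : ℂ)) • (F ⊙ G₁) + (2 * (n : ℂ)) • (G ⊙ F₁))
      ((2 : ℂ) • (SF * SG₁) + (2 : ℂ) • (SG * TF₁)) ∧
    IsTheta A B ((2 * (n : ℂ)) • (F ⊙ G₁) + (2 * (n : ℂ)) • (G ⊙ F₁))ᵀ
      ((2 : ℂ) • (SGtᵀ * SF₁) + (2 : ℂ) • (TF * SG₁tᵀ))ᵀ := by
  have hA' := typeII_sinv hA
  have hB' := typeII_sinv hB
  rw [aux_sinv_sinv] at *
  have eSF := exch_of hA hA'.1 hSF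
  have eSF₁ := exch_of hA hA'.1 hSF₁
  have eTF := exch_of hB' hB.1 hTF
  have eTF₁ := exch_of hB' hB.1 hTF₁
  have eSG := exch_of hA hB.1 hSG
  have eSG₁ := exch_of hA hB.1 hSG₁
  have eSGt := exch_of hB hA.1 (isTheta_swap hSGt)
  have eSG₁t := exch_of hB hA.1 (isTheta_swap hSG₁t)
  simp only [rowQ_sinv, Fintype.card_fin, Matrix.transpose_apply] at eSF eSF₁ eTF eTF₁ eSG eSG₁ eSGt eSG₁t
  have fin : ∀ (a b c d : ℂ) (v : Fin n → ℂ), a + b = c → d = c → a • v + b • v = d • v := by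
    intro a b c d v h1 h2
    rw [← add_smul, h1, h2]
  refine ⟨theta_of hA hA'.1 hc ?_, theta_of hB' hB.1 hc ?_, theta_of hA hB.1 hc ?_,
    isTheta_swap (theta_of hB hA.1 hc ?_)⟩ <;> intro k l <;>
  · simp only [rowQ_sinv, Fintype.card_fin, Matrix.vecMul_add, Matrix.vecMul_smul,
      ← Matrix.vecMul_vecMul, Matrix.smul_vecMul, eSF, eSF₁, eTF, eTF₁, eSG, eSG₁, eSGt, eSG₁t, smul_smul]
    refine fin _ _ _ _ _ rfl ?_
    simp [Matrix.hadamard_apply]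
    ring

theorem blockMat_mul {n : ℕ} (hn : 0 < n) (A B : Matrix (Fin n) (Fin n) ℂ)
    (h : IsInvertibleJonesPair A B) (hAs : Aᵀ = A)
    (F F₁ G G₁ H H₁ K K₁ SF SF₁ TF TF₁ SG SG₁ SGt SG₁t : Matrix (Fin n) (Fin n) ℂ)
    (hSF : IsTheta A (sinv A) F SF) (hSF₁ : IsTheta A (sinv A) F₁ SF₁)
    (hTF : IsTheta (sinv B) (sinv (sinv B)) F TF)
    (hTF₁ : IsTheta (sinv B) (sinv (sinv B)) F₁ TF₁)
    (hSG : IsTheta A B G SG) (hSG₁ : IsTheta A B G₁ SG₁)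
    (hSGt : IsTheta A B Gᵀ SGt) (hSG₁t : IsTheta A B G₁ᵀ SG₁t)
    (hHK : Paired A B H K) (hHK₁ : Paired A B H₁ K₁) :
    InNomura A (sinv A)
      ((2 * (n : ℂ)) • (F ⊙ F₁) + (2 * (n : ℂ)) • (G ⊙ G₁)) ∧
    InNomura A B ((2 * (n : ℂ)) • (F ⊙ G₁) + (2 * (n : ℂ)) • (G ⊙ F₁)) ∧
    InNomura A B ((2 : ℂ) • (H * H₁)) ∧
    Paired A B ((2 : ℂ) • (H * H₁)) ((2 : ℂ) • (K * K₁)) ∧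
    (∃ SF' TF' SG' SG't : Matrix (Fin n) (Fin n) ℂ,
      IsTheta A (sinv A)
        ((2 * (n : ℂ)) • (F ⊙ F₁) + (2 * (n : ℂ)) • (G ⊙ G₁)) SF' ∧
      IsTheta (sinv B) (sinv (sinv B))
        ((2 * (n : ℂ)) • (F ⊙ F₁) + (2 * (n : ℂ)) • (G ⊙ G₁)) TF' ∧
      IsTheta A B ((2 * (n : ℂ)) • (F ⊙ G₁) + (2 * (n : ℂ)) • (G ⊙ F₁)) SG' ∧
      IsTheta A B ((2 * (n : ℂ)) • (F ⊙ G₁) + (2 * (n : ℂ)) • (G ⊙ F₁))ᵀ SG't ∧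
      blockMat (SF + H) (SF - H) SG SGtᵀ (TF + K) (TF - K) *
          blockMat (SF₁ + H₁) (SF₁ - H₁) SG₁ SG₁tᵀ (TF₁ + K₁) (TF₁ - K₁) =
        blockMat (SF' + (2 : ℂ) • (H * H₁)) (SF' - (2 : ℂ) • (H * H₁)) SG' SG'tᵀ
          (TF' + (2 : ℂ) • (K * K₁)) (TF' - (2 : ℂ) • (K * K₁))) ∧
    blockMat (SF + H) (SF - H) SG SGtᵀ (TF + K) (TF - K) *
        blockMat (SF₁ + H₁) (SF₁ - H₁) SG₁ SG₁tᵀ (TF₁ + K₁) (TF₁ - K₁) =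
      blockMat (SF₁ + H₁) (SF₁ - H₁) SG₁ SG₁tᵀ (TF₁ + K₁) (TF₁ - K₁) *
        blockMat (SF + H) (SF - H) SG SGtᵀ (TF + K) (TF - K) := by
  have hc : ((Fintype.card (Fin n) : ℕ) : ℂ) ≠ 0 := by
    simpa using hn.ne'
  have hA := jones_typeII_A hc h
  have hB := jones_typeII_B hc h
  have hA' := typeII_sinv hA
  have hB' := typeII_sinv hB
  obtain ⟨c1, c2, c3, c4⟩ := core A B hc hA hB F F₁ G G₁ SF SF₁ TF TF₁ SG SG₁ SGt SG₁t
    hSF hSF₁ hTF hTF₁ hSG hSG₁ hSGt hSG₁t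
  obtain ⟨d1, d2, d3, d4⟩ := core A B hc hA hB F₁ F G₁ G SF₁ SF TF₁ TF SG₁ SG SG₁t SGt
    hSF₁ hSF hTF₁ hTF hSG₁ hSG hSG₁t hSGt
  have s1 : (2 * (n : ℂ)) • (F₁ ⊙ F) + (2 * (n : ℂ)) • (G₁ ⊙ G) =
      (2 * (n : ℂ)) • (F ⊙ F₁) + (2 * (n : ℂ)) • (G ⊙ G₁) := by
    rw [Matrix.hadamard_comm F₁, Matrix.hadamard_comm G₁]
  have s2 : (2 * (n : ℂ)) • (F₁ ⊙ G) + (2 * (n : ℂ)) • (G₁ ⊙ F) =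
      (2 * (n : ℂ)) • (F ⊙ G₁) + (2 * (n : ℂ)) • (G ⊙ F₁) := by
    rw [Matrix.hadamard_comm F₁, Matrix.hadamard_comm G₁, add_comm]
  rw [s1] at d1 d2
  rw [s2] at d3 d4
  obtain ⟨S, hS, hSt⟩ := hHK
  obtain ⟨S₁, hS₁, hS₁t⟩ := hHK₁
  have hBt : ∀ i j, Bᵀ i j ≠ 0 := fun i j => hB.1 j i
  have hHc : H * H₁ = H₁ * H :=
    theta_inj hA hB.1 hc (theta_mul hS hS₁) (by
      rw [Matrix.hadamard_comm]; exact theta_mul hS₁ hS)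
  have hKc : K * K₁ = K₁ * K := by
    have : Kᵀ * K₁ᵀ = K₁ᵀ * Kᵀ :=
      theta_inj hA hBt hc (theta_mul hSt hS₁t) (by
        rw [Matrix.hadamard_comm]; exact theta_mul hS₁t hSt)
    rw [← Matrix.transpose_mul, ← Matrix.transpose_mul] at this
    exact (Matrix.transpose_injective this).symm
  have hHH := theta_smul 2 (theta_mul hS hS₁)
  refine ⟨fun i j => ⟨_, c1 i j⟩, fun i j => ⟨_, c3 i j⟩, fun i j => ⟨_, hHH i j⟩,
    ⟨_, hHH, ?_⟩, ⟨_, _, _, _, c1, c2, c3, c4, ?_⟩, ?_⟩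
  · have := theta_smul 2 (theta_mul hSt hS₁t)
    rw [← Matrix.transpose_mul, ← hKc] at this
    exact this
  · rw [blockMat_prod, Matrix.transpose_transpose]
  · rw [blockMat_prod, blockMat_prod, theta_unique hA.1 hA'.1 c1 d1,
      theta_unique hB'.1 (typeII_sinv hB').1 c2 d2, theta_unique hA.1 hB.1 c3 d3,
      Matrix.transpose_injective (theta_unique hA.1 hB.1 c4 d4), hHc, hKc]
end

section
/- Yamada's theorem: Let A and B be n×n type-II matrices with A symmetric, let d ∈ ℂ satisfy d² = n, and let V be the associated 4n×4n matrix (which is a symmetric type-II matrix). Then (A,B) is a Jones pair (equivalently, an invertible Jones pair) if and only if V is a spin model, i.e. ((2d)^{-1}V, V^(-)) is an invertible Jones pair of 4n×4n matrices. -/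
open Matrix

variable {m : Type*} [Fintype m] [DecidableEq m]

theorem typeII_iff {m : Type*} [Fintype m] [DecidableEq m] (W : Matrix m m ℂ) :
    IsTypeII W ↔ (∀ i j, W i j ≠ 0) ∧
      ∀ x y, ∑ k, W x k * (W y k)⁻¹ = if x = y then (Fintype.card m : ℂ) else 0 := by
  unfold IsTypeII
  refine and_congr_right fun _ => ?_
  rw [← Matrix.ext_iff]
  simp [Matrix.mul_apply, sinv, Matrix.one_apply]

theorem jones_iff {m : Type*} [Fintype m] [DecidableEq m] (A B : Matrix m m ℂ) :
    (∀ M : Matrix m m ℂ, A * (B ⊙ (A * M)) = B ⊙ (A * (B ⊙ M))) ↔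
    ∀ a i j, ∑ k, A a k * A k i * B k j = A a i * B a j * B i j := by
  constructor
  · intro h a i j
    have := congrFun (congrFun (h (Matrix.single i j 1)) a) j
    simp only [Matrix.mul_apply, Matrix.hadamard_apply, Matrix.single_apply] at this
    simp only [and_true, mul_ite, mul_one, mul_zero, Finset.sum_ite_eq, Finset.mem_univ,
      if_true] at this
    rw [show A a i * B a j * B i j = B a j * (A a i * B i j) by ring, ← this]
    exact Finset.sum_congr rfl fun k _ => by ring
  · intro h M
    ext a j
    simp only [Matrix.mul_apply, Matrix.hadamard_apply, Finset.mul_sum]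
    rw [Finset.sum_comm]
    refine Finset.sum_congr rfl fun i _ => ?_
    rw [show B a j * (A a i * (B i j * M i j)) = (A a i * B a j * B i j) * M i j by ring, ← h a i j,
      Finset.sum_mul]
    exact Finset.sum_congr rfl fun k _ => by ring

theorem typeII_mul_left {m : Type*} [Fintype m] [DecidableEq m] [Nonempty m] {W : Matrix m m ℂ}
    (h : IsTypeII W) : (sinv W)ᵀ * W = (Fintype.card m : ℂ) • (1 : Matrix m m ℂ) := by
  have hc : (Fintype.card m : ℂ) ≠ 0 := by simp
  have h1 : W * ((Fintype.card m : ℂ)⁻¹ • (sinv W)ᵀ) = 1 := by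
    rw [Matrix.mul_smul, h.2, smul_smul, inv_mul_cancel₀ hc, one_smul]
  have h2 := mul_eq_one_comm.mp h1
  rw [Matrix.smul_mul] at h2
  rw [← h2, smul_smul, mul_inv_cancel₀ hc, one_smul]

theorem typeII_isUnit {m : Type*} [Fintype m] [DecidableEq m] [Nonempty m] {W : Matrix m m ℂ}
    (h : IsTypeII W) : IsUnit W ∧ IsUnit (sinv W) := by
  have hc : (Fintype.card m : ℂ) ≠ 0 := by simp
  have h1 : W * ((Fintype.card m : ℂ)⁻¹ • (sinv W)ᵀ) = 1 := by
    rw [Matrix.mul_smul, h.2, smul_smul, inv_mul_cancel₀ hc, one_smul]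
  have h2 : ((Fintype.card m : ℂ)⁻¹ • Wᵀ) * sinv W = 1 := by
    have := congrArg Matrix.transpose (mul_eq_one_comm.mp h1)
    simpa [Matrix.transpose_mul] using this
  exact ⟨IsUnit.of_mul_eq_one _ h1, IsUnit.of_mul_eq_one_right _ h2⟩

theorem typeII_transpose {m : Type*} [Fintype m] [DecidableEq m] [Nonempty m] {W : Matrix m m ℂ}
    (h : IsTypeII W) : IsTypeII Wᵀ := by
  refine ⟨fun i j => h.1 j i, ?_⟩
  have := congrArg Matrix.transpose (typeII_mul_left h)
  have e : (sinv Wᵀ)ᵀ = sinv W := by ext; simp [sinv]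
  rw [e]
  simpa [Matrix.transpose_mul] using this

/-- Consequences of the first Jones relation. -/
theorem jones_cons {m : Type*} [Fintype m] [DecidableEq m] [Nonempty m] {A B : Matrix m m ℂ}
    (hA : IsTypeII A) (hB : IsTypeII B) (hAs : Aᵀ = A)
    (h : ∀ a i j, ∑ k, A a k * A k i * B k j = A a i * B a j * B i j) :
    (∀ a j i, ∑ k, A a k * (A j k)⁻¹ * (B k i)⁻¹ = B j i * (B a i)⁻¹ * (A a j)⁻¹) ∧
    (∀ a i j, ∑ k, B j k * (B a k)⁻¹ * (B i k)⁻¹ = A a i * (A a j)⁻¹ * (A i j)⁻¹) := by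
  have hc : (Fintype.card m : ℂ) ≠ 0 := by simp
  have hs : ∀ i j, A i j = A j i := fun i j => congrFun (congrFun hAs j) i
  have hA0 := hA.1
  have hB0 := hB.1
  set c : ℂ := (Fintype.card m : ℂ) with hcdef
  set A' : Matrix m m ℂ := c⁻¹ • (sinv A)ᵀ with hA'
  have hAA' : A * A' = 1 := by
    rw [hA', Matrix.mul_smul, hA.2, smul_smul, inv_mul_cancel₀ hc, one_smul]
  have hA'A : A' * A = 1 := mul_eq_one_comm.mp hAA'
  have hD : ∀ j, A * diagonal (fun k => B k j) * A
      = diagonal (fun k => B k j) * A * diagonal (fun k => B k j) := by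
    intro j
    ext a i
    rw [Matrix.mul_apply]
    simp only [Matrix.mul_diagonal, Matrix.diagonal_mul]
    rw [show B a j * A a i * B i j = A a i * B a j * B i j by ring, ← h]
    exact Finset.sum_congr rfl fun k _ => by ring
  have hDE : ∀ j, diagonal (fun k => B k j) * diagonal (fun k => (B k j)⁻¹) = 1 := by
    intro j
    rw [diagonal_mul_diagonal]
    simp [hB0]
  have hED : ∀ j, diagonal (fun k => (B k j)⁻¹) * diagonal (fun k => B k j) = 1 :=
    fun j => mul_eq_one_comm.mp (hDE j)
  -- the inverted relation
  have h3 : ∀ j, A * diagonal (fun k => (B k j)⁻¹) * A'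
      = diagonal (fun k => (B k j)⁻¹) * A' * diagonal (fun k => B k j) := by
    intro j
    have hd := hD j
    have h1 := hDE j
    have h2 := hED j
    generalize diagonal (fun k => B k j) = D at *
    generalize diagonal (fun k => (B k j)⁻¹) = E at *
    have e : E * A' * D * (A * A') = A * E * A' := by
      calc E * A' * D * (A * A') = E * A' * (D * A * 1) * A' := by noncomm_ring
        _ = E * A' * (D * A * D) * E * A' := by rw [← h1]; noncomm_ring
        _ = E * (A' * A) * D * A * E * A' := by rw [← hd]; noncomm_ring
        _ = (E * D) * A * E * A' := by rw [hA'A]; noncomm_ring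
        _ = A * E * A' := by rw [h2]; noncomm_ring
    rw [← e, hAA', mul_one]
  have h4 : ∀ j, A' * diagonal (fun k => (B k j)⁻¹) * A'
      = diagonal (fun k => (B k j)⁻¹) * A' * diagonal (fun k => (B k j)⁻¹) := by
    intro j
    have hd := hD j
    have h1 := hDE j
    have h2 := hED j
    generalize diagonal (fun k => B k j) = D at *
    generalize diagonal (fun k => (B k j)⁻¹) = E at *
    have e1 : (A * D * A) * (A' * E * A') = 1 := by
      calc (A * D * A) * (A' * E * A') = A * D * (A * A') * E * A' := by noncomm_ring
        _ = A * (D * E) * A' := by rw [hAA']; noncomm_ring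
        _ = 1 := by rw [h1, mul_one, hAA']
    have e2 : (E * A' * E) * (A * D * A) = 1 := by
      calc (E * A' * E) * (A * D * A) = E * A' * (E * D) * A * D := by rw [hd]; noncomm_ring
        _ = E * (A' * A) * D := by rw [h2]; noncomm_ring
        _ = 1 := by rw [hA'A, mul_one, h2]
    exact (left_inv_eq_right_inv e2 e1).symm
  have h3' : ∀ a j i, ∑ k, A a k * (A j k)⁻¹ * (B k i)⁻¹ = B j i * (B a i)⁻¹ * (A a j)⁻¹ := by
    intro a j i
    have := congrFun (congrFun (h3 i) a) j
    rw [Matrix.mul_apply] at this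
    simp only [Matrix.mul_diagonal, Matrix.diagonal_mul, hA', Matrix.smul_apply,
      Matrix.transpose_apply, sinv, Matrix.of_apply, smul_eq_mul] at this
    rw [hs a j]
    have e : c⁻¹ * ∑ k, A a k * (A j k)⁻¹ * (B k i)⁻¹
        = c⁻¹ * (B j i * (B a i)⁻¹ * (A j a)⁻¹) := by
      rw [Finset.mul_sum]
      refine Eq.trans (Finset.sum_congr rfl fun k _ => ?_) (this.trans ?_) <;> ring
    exact mul_left_cancel₀ (inv_ne_zero hc) e
  refine ⟨h3', ?_⟩
  have h4' : ∀ a i j, ∑ k, (A a k)⁻¹ * (A k i)⁻¹ * (B k j)⁻¹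
      = c * ((A a i)⁻¹ * (B a j)⁻¹ * (B i j)⁻¹) := by
    intro a i j
    have := congrFun (congrFun (h4 j) a) i
    rw [Matrix.mul_apply] at this
    simp only [Matrix.mul_diagonal, Matrix.diagonal_mul, hA', Matrix.smul_apply,
      Matrix.transpose_apply, sinv, Matrix.of_apply, smul_eq_mul] at this
    have e : (c⁻¹ * c⁻¹) * ∑ k, (A a k)⁻¹ * (A k i)⁻¹ * (B k j)⁻¹
        = (c⁻¹ * c⁻¹) * (c * ((A a i)⁻¹ * (B a j)⁻¹ * (B i j)⁻¹)) := by
      rw [Finset.mul_sum]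
      refine Eq.trans (Finset.sum_congr rfl fun k _ => ?_) (this.trans ?_)
      · rw [hs a k, hs k i]; ring
      · rw [hs a i]; field_simp
    exact mul_left_cancel₀ (mul_ne_zero (inv_ne_zero hc) (inv_ne_zero hc)) e
  intro a i l
  have hB2 := ((typeII_iff B).mp hB).2
  have e1 : ∑ j, B l j * ∑ k, (A a k)⁻¹ * (A k i)⁻¹ * (B k j)⁻¹
      = c * ((A a l)⁻¹ * (A l i)⁻¹) := by
    simp only [Finset.mul_sum]
    rw [Finset.sum_comm]
    calc _ = ∑ k, (A a k)⁻¹ * (A k i)⁻¹ * ∑ j, B l j * (B k j)⁻¹ := by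
          refine Finset.sum_congr rfl fun k _ => ?_
          rw [Finset.mul_sum]
          exact Finset.sum_congr rfl fun j _ => by ring
      _ = _ := by simp only [hB2]; simp [c]; ring
  have e2 : ∑ j, B l j * ∑ k, (A a k)⁻¹ * (A k i)⁻¹ * (B k j)⁻¹
      = c * (A a i)⁻¹ * ∑ k, B l k * (B a k)⁻¹ * (B i k)⁻¹ := by
    rw [Finset.mul_sum]
    refine Finset.sum_congr rfl fun k _ => ?_
    rw [h4']; ring
  have e3 := e2.symm.trans e1
  have := hA0 a i
  rw [hs l i] at e3
  have e4 : c * (A a i)⁻¹ * ∑ k, B l k * (B a k)⁻¹ * (B i k)⁻¹ =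
     c * (A a i)⁻¹ * (A a i * (A a l)⁻¹ * (A i l)⁻¹) := by
    rw [e3]; field_simp
  exact mul_left_cancel₀ (mul_ne_zero hc (inv_ne_zero this)) e4

/-! Block structure of `V`. -/

def loI (p : Fin 2) : Fin 4 := ![0, 1] p
def hiI (p : Fin 2) : Fin 4 := ![2, 3] p
noncomputable def sg (p : Fin 2) : ℂ := ![1, -1] p

theorem lohi (p : Fin 4) : (∃ q, p = loI q) ∨ ∃ q, p = hiI q := by
  fin_cases p
  · exact Or.inl ⟨0, rfl⟩
  · exact Or.inl ⟨1, rfl⟩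
  · exact Or.inr ⟨0, rfl⟩
  · exact Or.inr ⟨1, rfl⟩

theorem sg_cases (p : Fin 2) : sg p = 1 ∨ sg p = -1 := by
  fin_cases p <;> simp [sg]

theorem sum_lohi {n : ℕ} (f : Fin 4 × Fin n → ℂ) :
    ∑ x, f x = ∑ k, (f (loI 0, k) + f (loI 1, k) + f (hiI 0, k) + f (hiI 1, k)) := by
  rw [Fintype.sum_prod_type, Fin.sum_univ_four]
  simp only [Finset.sum_add_distrib]
  rfl

section V
variable {n : ℕ} (A B : Matrix (Fin n) (Fin n) ℂ) (d : ℂ) (p q : Fin 2) (a b : Fin n)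

theorem Vll : Vmat A B d (loI p, a) (loI q, b) = sg p * sg q * d * A a b := by
  fin_cases p <;> fin_cases q
  · change d * A a b = 1 * 1 * d * A a b
    ring
  · change -(d * A a b) = 1 * (-1) * d * A a b
    ring
  · change -(d * A a b) = (-1) * 1 * d * A a b
    ring
  · change d * A a b = (-1) * (-1) * d * A a b
    ring
theorem Vhh : Vmat A B d (hiI p, a) (hiI q, b) = sg p * sg q * d * A a b := by
  fin_cases p <;> fin_cases q
  · change d * A a b = 1 * 1 * d * A a b
    ring
  · change -(d * A a b) = 1 * (-1) * d * A a b
    ring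
  · change -(d * A a b) = (-1) * 1 * d * A a b
    ring
  · change d * A a b = (-1) * (-1) * d * A a b
    ring
theorem Vlh : Vmat A B d (loI p, a) (hiI q, b) = (B a b)⁻¹ := by
  fin_cases p <;> fin_cases q <;> rfl
theorem Vhl : Vmat A B d (hiI p, a) (loI q, b) = (B b a)⁻¹ := by
  fin_cases p <;> fin_cases q <;> rfl
end V

theorem sg0 : sg 0 = 1 := rfl
theorem sg1 : sg 1 = -1 := rfl

theorem V_symm {n : ℕ} (A B : Matrix (Fin n) (Fin n) ℂ) (hAs : Aᵀ = A) (d : ℂ) :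
    (Vmat A B d)ᵀ = Vmat A B d := by
  have hs : ∀ i j, A i j = A j i := fun i j => congrFun (congrFun hAs j) i
  ext ⟨x, a⟩ ⟨y, b⟩
  rw [Matrix.transpose_apply]
  rcases lohi x with ⟨p, rfl⟩ | ⟨p, rfl⟩ <;> rcases lohi y with ⟨q, rfl⟩ | ⟨q, rfl⟩ <;>
    simp only [Vll, Vhh, Vlh, Vhl, hs b a] <;> ring

theorem lo_eq (p q : Fin 2) : loI p = loI q ↔ sg p * sg q = 1 := by
  fin_cases p <;> fin_cases q <;> norm_num [loI, sg]
theorem hi_eq (p q : Fin 2) : hiI p = hiI q ↔ sg p * sg q = 1 := by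
  fin_cases p <;> fin_cases q <;> norm_num [hiI, sg] <;> decide
theorem lo_ne_hi (p q : Fin 2) : loI p ≠ hiI q := by
  fin_cases p <;> fin_cases q <;> simp [hiI, loI]

theorem V_ne {n : ℕ} {A B : Matrix (Fin n) (Fin n) ℂ} (hA : ∀ i j, A i j ≠ 0)
    (hB : ∀ i j, B i j ≠ 0) {d : ℂ} (hd : d ≠ 0) (x y) : Vmat A B d x y ≠ 0 := by
  obtain ⟨x, a⟩ := x
  obtain ⟨y, b⟩ := y
  have hs : ∀ p, sg p ≠ 0 := fun p => by rcases sg_cases p with h | h <;> simp [h]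
  rcases lohi x with ⟨p, rfl⟩ | ⟨p, rfl⟩ <;> rcases lohi y with ⟨q, rfl⟩ | ⟨q, rfl⟩ <;>
    simp [Vll, Vhh, Vlh, Vhl, hA, hB, hd, hs]

theorem V_typeII {n : ℕ} [Nonempty (Fin n)] {A B : Matrix (Fin n) (Fin n) ℂ} (hA : IsTypeII A)
    (hB : IsTypeII B) {d : ℂ} (hd : d ≠ 0) : IsTypeII (Vmat A B d) := by
  rw [typeII_iff]
  refine ⟨V_ne hA.1 hB.1 hd, ?_⟩
  have hA2 := ((typeII_iff A).mp hA).2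
  have hB2 := ((typeII_iff B).mp hB).2
  have hB3 := ((typeII_iff Bᵀ).mp (typeII_transpose hB)).2
  simp only [Matrix.transpose_apply] at hB3
  rintro ⟨x, a⟩ ⟨y, b⟩
  rw [sum_lohi]
  rcases lohi x with ⟨p, rfl⟩ | ⟨p, rfl⟩ <;> rcases lohi y with ⟨q, rfl⟩ | ⟨q, rfl⟩ <;>
    simp only [Vll, Vhh, Vlh, Vhl, sg0, sg1]
  · trans 2 * (sg p * sg q) * (∑ k, A a k * (A b k)⁻¹) + 2 * ∑ k, B b k * (B a k)⁻¹
    · rw [Finset.mul_sum, Finset.mul_sum, ← Finset.sum_add_distrib]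
      refine Finset.sum_congr rfl fun k _ => ?_
      have := hA.1 b k
      rcases sg_cases p with h | h <;> rcases sg_cases q with h' | h' <;> rw [h, h'] <;>
        field_simp <;> ring
    · rw [hA2, hB2]
      simp only [Prod.mk.injEq, lo_eq, eq_comm (a := b)]
      by_cases hab : a = b <;> simp [hab]
      rcases sg_cases p with h | h <;> rcases sg_cases q with h' | h' <;> rw [h, h'] <;> norm_num <;>
        ring
  · rw [if_neg (by simp [lo_ne_hi])]
    refine Finset.sum_eq_zero fun k _ => ?_
    rcases sg_cases p with h | h <;> rcases sg_cases q with h' | h' <;> rw [h, h'] <;>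
        field_simp <;> ring
  · rw [if_neg (by simp [(lo_ne_hi _ _).symm])]
    refine Finset.sum_eq_zero fun k _ => ?_
    rcases sg_cases p with h | h <;> rcases sg_cases q with h' | h' <;> rw [h, h'] <;>
        field_simp <;> ring
  · trans 2 * (sg p * sg q) * (∑ k, A a k * (A b k)⁻¹) + 2 * ∑ k, B k b * (B k a)⁻¹
    · rw [Finset.mul_sum, Finset.mul_sum, ← Finset.sum_add_distrib]
      refine Finset.sum_congr rfl fun k _ => ?_
      have := hA.1 b k
      rcases sg_cases p with h | h <;> rcases sg_cases q with h' | h' <;> rw [h, h'] <;>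
        field_simp <;> ring
    · rw [hA2, hB3]
      simp only [Prod.mk.injEq, hi_eq, eq_comm (a := b)]
      by_cases hab : a = b <;> simp [hab]
      rcases sg_cases p with h | h <;> rcases sg_cases q with h' | h' <;> rw [h, h'] <;> norm_num <;>
        ring

/-- Spin relation from the two Jones relations. -/
theorem spin_of_jones {n : ℕ} [Nonempty (Fin n)] {A B : Matrix (Fin n) (Fin n) ℂ} (hA : IsTypeII A)
    (hB : IsTypeII B) (hAs : Aᵀ = A) {d : ℂ} (hd : d ≠ 0)
    (h1 : ∀ a i j, ∑ k, A a k * A k i * B k j = A a i * B a j * B i j)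
    (h2 : ∀ a i j, ∑ k, A a k * A k i * B j k = A a i * B j a * B j i) (x z y) :
    ∑ k, Vmat A B d x k * Vmat A B d k z * (Vmat A B d k y)⁻¹
      = 2 * d * (Vmat A B d x z * (Vmat A B d x y)⁻¹ * (Vmat A B d z y)⁻¹) := by
  have hs : ∀ i j, A i j = A j i := fun i j => congrFun (congrFun hAs j) i
  obtain ⟨f1, g1⟩ := jones_cons hA hB hAs h1
  obtain ⟨f2, g2⟩ := jones_cons hA (typeII_transpose hB) hAs h2
  simp only [Matrix.transpose_apply] at f2 g2
  have hA0 := hA.1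
  have hB0 := hB.1
  obtain ⟨x, a⟩ := x
  obtain ⟨z, i⟩ := z
  obtain ⟨y, j⟩ := y
  rw [sum_lohi]
  have key : ∀ (F G : Fin n → ℂ) (c R S : ℂ), ∑ k, G k = S → (∀ k, F k = c * G k) → c * S = R →
      ∑ k, F k = R := by
    intro F G c R S h h' h''
    rw [← h'', ← h, Finset.mul_sum]
    exact Finset.sum_congr rfl fun k _ => h' k
  rcases lohi x with ⟨p, rfl⟩ | ⟨p, rfl⟩ <;> rcases lohi z with ⟨q, rfl⟩ | ⟨q, rfl⟩ <;>
    rcases lohi y with ⟨r, rfl⟩ | ⟨r, rfl⟩ <;>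
    simp only [Vll, Vhh, Vlh, Vhl, sg0, sg1]
  · refine key _ _ 2 _ _ (g1 a i j) (fun k => ?_) ?_ <;>
    rcases sg_cases p with h | h <;> rcases sg_cases q with h' | h' <;>
      rcases sg_cases r with h'' | h'' <;> simp only [h, h', h''] <;> field_simp [hA0, hB0] <;> try ring
  · refine key _ _ (2 * d ^ 2 * (sg p * sg q)) _ _ (h1 a i j) (fun k => ?_) ?_ <;>
    rcases sg_cases p with h | h <;> rcases sg_cases q with h' | h' <;>
      rcases sg_cases r with h'' | h'' <;> simp only [h, h', h''] <;> field_simp [hA0, hB0] <;> try ring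
  · refine key _ _ (2 * (sg p * sg r)) _ _ (f1 a j i) (fun k => ?_) ?_ <;>
    (try rw [hs k j]) <;>
    rcases sg_cases p with h | h <;> rcases sg_cases q with h' | h' <;>
      rcases sg_cases r with h'' | h'' <;> simp only [h, h', h''] <;> field_simp [hA0, hB0] <;> try ring
  · refine key _ _ (2 * (sg q * sg r)) _ _ (f2 i j a) (fun k => ?_) ?_ <;>
    (try rw [hs k j, hs k i]) <;>
    rcases sg_cases p with h | h <;> rcases sg_cases q with h' | h' <;>
      rcases sg_cases r with h'' | h'' <;> simp only [h, h', h''] <;> field_simp [hA0, hB0] <;> try ring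
  · refine key _ _ (2 * (sg q * sg r)) _ _ (f1 i j a) (fun k => ?_) ?_ <;>
    (try rw [hs k j, hs k i]) <;>
    rcases sg_cases p with h | h <;> rcases sg_cases q with h' | h' <;>
      rcases sg_cases r with h'' | h'' <;> simp only [h, h', h''] <;> field_simp [hA0, hB0] <;> try ring
  · refine key _ _ (2 * (sg p * sg r)) _ _ (f2 a j i) (fun k => ?_) ?_ <;>
    (try rw [hs k j]) <;>
    rcases sg_cases p with h | h <;> rcases sg_cases q with h' | h' <;>
      rcases sg_cases r with h'' | h'' <;> simp only [h, h', h''] <;> field_simp [hA0, hB0] <;> try ring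
  · refine key _ _ (2 * d ^ 2 * (sg p * sg q)) _ _ (h2 a i j) (fun k => ?_) ?_ <;>
    rcases sg_cases p with h | h <;> rcases sg_cases q with h' | h' <;>
      rcases sg_cases r with h'' | h'' <;> simp only [h, h', h''] <;> field_simp [hA0, hB0] <;> try ring
  · refine key _ _ 2 _ _ (g2 a i j) (fun k => ?_) ?_ <;>
    rcases sg_cases p with h | h <;> rcases sg_cases q with h' | h' <;>
      rcases sg_cases r with h'' | h'' <;> simp only [h, h', h''] <;> field_simp [hA0, hB0] <;> try ring

theorem jones_of_spin {n : ℕ} {A B : Matrix (Fin n) (Fin n) ℂ} {d : ℂ} (hd : d ≠ 0)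
    (h : ∀ x z y, ∑ k, Vmat A B d x k * Vmat A B d k z * (Vmat A B d k y)⁻¹
      = 2 * d * (Vmat A B d x z * (Vmat A B d x y)⁻¹ * (Vmat A B d z y)⁻¹)) :
    (∀ a i j, ∑ k, A a k * A k i * B k j = A a i * B a j * B i j) ∧
    (∀ a i j, ∑ k, A a k * A k i * B j k = A a i * B j a * B j i) := by
  have hc : 2 * d ^ 2 ≠ 0 := mul_ne_zero two_ne_zero (pow_ne_zero 2 hd)
  constructor
  · intro a i j
    have := h (loI 0, a) (loI 0, i) (hiI 0, j)
    rw [sum_lohi] at this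
    simp only [Vll, Vhh, Vlh, Vhl, sg0, sg1] at this
    apply mul_left_cancel₀ hc
    rw [Finset.mul_sum]
    refine Eq.trans (Finset.sum_congr rfl fun k _ => ?_) (this.trans ?_)
    · simp only [inv_inv, neg_mul, one_mul, mul_neg, mul_one, neg_neg, inv_neg]; ring
    · simp only [inv_inv]; ring
  · intro a i j
    have := h (hiI 0, a) (hiI 0, i) (loI 0, j)
    rw [sum_lohi] at this
    simp only [Vll, Vhh, Vlh, Vhl, sg0, sg1] at this
    apply mul_left_cancel₀ hc
    rw [Finset.mul_sum]
    refine Eq.trans (Finset.sum_congr rfl fun k _ => ?_) (this.trans ?_)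
    · simp only [inv_inv, neg_mul, one_mul, mul_neg, mul_one, neg_neg, inv_neg]; ring
    · simp only [inv_inv]; ring

theorem spin_iff {m : Type*} [Fintype m] [DecidableEq m] [Nonempty m] {W : Matrix m m ℂ}
    (hW : IsTypeII W) (hs : Wᵀ = W) {e : ℂ} (he : e ≠ 0) :
    IsInvertibleJonesPair (e⁻¹ • W) (sinv W) ↔
      ∀ x z y, ∑ k, W x k * W k z * (W k y)⁻¹ = e * (W x z * (W x y)⁻¹ * (W z y)⁻¹) := by
  have hss : (sinv W)ᵀ = sinv W := by
    conv_rhs => rw [← hs]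
    rfl
  have hiff : (∀ a i j, ∑ k, (e⁻¹ • W) a k * (e⁻¹ • W) k i * (sinv W) k j
      = (e⁻¹ • W) a i * sinv W a j * sinv W i j) ↔
      ∀ x z y, ∑ k, W x k * W k z * (W k y)⁻¹ = e * (W x z * (W x y)⁻¹ * (W z y)⁻¹) := by
    refine forall_congr' fun x => forall_congr' fun z => forall_congr' fun y => ?_
    simp only [Matrix.smul_apply, sinv, Matrix.of_apply, smul_eq_mul]
    have e1 : ∑ k, e⁻¹ * W x k * (e⁻¹ * W k z) * (W k y)⁻¹
        = (e⁻¹ * e⁻¹) * ∑ k, W x k * W k z * (W k y)⁻¹ := by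
      rw [Finset.mul_sum]
      exact Finset.sum_congr rfl fun k _ => by ring
    rw [e1, show e⁻¹ * W x z * (W x y)⁻¹ * (W z y)⁻¹
      = (e⁻¹ * e⁻¹) * (e * (W x z * (W x y)⁻¹ * (W z y)⁻¹)) by field_simp]
    exact mul_right_inj' (mul_ne_zero (inv_ne_zero he) (inv_ne_zero he))
  unfold IsInvertibleJonesPair IsJonesPair
  rw [hss, jones_iff, hiff]
  constructor
  · exact fun h => h.1.2.2.1
  · intro h
    obtain ⟨u1, u2⟩ := typeII_isUnit hW
    refine ⟨⟨?_, fun i j => inv_ne_zero (hW.1 i j), h, h⟩,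
      fun i j => mul_ne_zero (inv_ne_zero he) (hW.1 i j), u2⟩
    exact (IsUnit.smul (Units.mk0 _ (inv_ne_zero he)) u1)

/-- Yamada's theorem. -/
theorem yamada {n : ℕ} (hn : 0 < n) (A B : Matrix (Fin n) (Fin n) ℂ)
    (hA : IsTypeII A) (hB : IsTypeII B) (hAs : Aᵀ = A)
    (d : ℂ) (hd : d ^ 2 = (n : ℂ)) :
    (Vmat A B d)ᵀ = Vmat A B d ∧
    IsTypeII (Vmat A B d) ∧
    (IsJonesPair A B ↔
      IsInvertibleJonesPair ((2 * d)⁻¹ • Vmat A B d) (sinv (Vmat A B d))) ∧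
    (IsInvertibleJonesPair A B ↔
      IsInvertibleJonesPair ((2 * d)⁻¹ • Vmat A B d) (sinv (Vmat A B d))) := by
  haveI : Nonempty (Fin n) := ⟨⟨0, hn⟩⟩
  have hd0 : d ≠ 0 := by
    rintro rfl
    have : (n : ℂ) = 0 := by rw [← hd]; simp
    exact hn.ne' (by exact_mod_cast this)
  have hV := V_typeII hA hB hd0
  have hVs := V_symm A B hAs d
  have main : IsJonesPair A B ↔
      IsInvertibleJonesPair ((2 * d)⁻¹ • Vmat A B d) (sinv (Vmat A B d)) := by
    rw [spin_iff hV hVs (mul_ne_zero two_ne_zero hd0)]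
    unfold IsJonesPair
    rw [jones_iff, jones_iff]
    constructor
    · rintro ⟨-, -, h1, h2⟩
      exact spin_of_jones hA hB hAs hd0 h1 h2
    · intro h
      obtain ⟨h1, h2⟩ := jones_of_spin hd0 h
      exact ⟨(typeII_isUnit hA).1, hB.1, h1, h2⟩
  refine ⟨hVs, hV, main, ?_⟩
  rw [← main]
  exact ⟨fun h => h.1, fun h => ⟨h, hA.1, (typeII_isUnit hB).1⟩⟩
end
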